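/- arXiv:1306.4221 — 3 statements merged into one kernel-verified Lean document; each statement's English description precedes it below -/
import Mathlib

section
/- The 6×6 real symmetric Coxeter–Schläfli matrix C₂ of the compact Coxeter orthoscheme [5,3,3,3,4] has leading principal minors of orders 1, 2, 3, and 4 strictly positive, while its leading principal minors of orders 5 and 6 are strictly negative; consequently the associated quadratic form has signature (5,1), i.e. exactly one negative eigenvalue. -/
open Real Matrix

/-- The Coxeter–Schläfli matrix of the compact Coxeter orthoscheme `[5,3,3,3,4]`. -/
noncomputable def C2 : Matrix (Fin 6) (Fin 6) ℝ :=
  !![1, -Real.cos (π/5), 0, 0, 0, 0;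
     -Real.cos (π/5), 1, -(1/2), 0, 0, 0;
     0, -(1/2), 1, -(1/2), 0, 0;
     0, 0, -(1/2), 1, -(1/2), 0;
     0, 0, 0, -(1/2), 1, -(Real.sqrt 2/2);
     0, 0, 0, 0, -(Real.sqrt 2/2), 1]

/-- The leading principal minor of order `k` of a `6 × 6` real matrix. -/
noncomputable def leadingMinor (A : Matrix (Fin 6) (Fin 6) ℝ) (k : ℕ) (h : k ≤ 6) : ℝ :=
  (A.submatrix (Fin.castLE h) (Fin.castLE h)).det

/-- If the quadratic form of a real symmetric matrix is nonnegative on a coordinate hyperplane,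
then the matrix has at most one negative eigenvalue. -/
theorem Matrix.IsHermitian.card_eigenvalues_neg_le_one {n : Type*} [Fintype n] [DecidableEq n]
    {A : Matrix n n ℝ} (hA : A.IsHermitian) (k : n)
    (hk : ∀ x : n → ℝ, x k = 0 → 0 ≤ x ⬝ᵥ A *ᵥ x) :
    (Finset.univ.filter fun i => hA.eigenvalues i < 0).card ≤ 1 := by
  refine Finset.card_le_one.2 fun i hi j hj => ?_
  simp only [Finset.mem_filter, Finset.mem_univ, true_and] at hi hj
  by_contra hij
  have dot_eigenvectors (p q : n) : (hA.eigenvectorBasis p : n → ℝ) ⬝ᵥ hA.eigenvectorBasis q =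
      if p = q then 1 else 0 := by
    rw [← orthonormal_iff_ite.1 hA.eigenvectorBasis.orthonormal p q,
      EuclideanSpace.inner_eq_star_dotProduct, dotProduct_comm]
    simp
  have quadratic_form (a b : ℝ) :
      (a • (hA.eigenvectorBasis i : n → ℝ) + b • (hA.eigenvectorBasis j : n → ℝ)) ⬝ᵥ
        A *ᵥ (a • (hA.eigenvectorBasis i : n → ℝ) + b • (hA.eigenvectorBasis j : n → ℝ)) =
      a ^ 2 * hA.eigenvalues i + b ^ 2 * hA.eigenvalues j := by
    simp only [mulVec_add, mulVec_smul, hA.mulVec_eigenvectorBasis, add_dotProduct,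
      dotProduct_add, smul_dotProduct, dotProduct_smul, dot_eigenvectors, if_neg hij,
      if_neg (Ne.symm hij), if_true, smul_eq_mul]
    ring
  by_cases hik : hA.eigenvectorBasis i k = 0
  · have := hk _ (show (((1 : ℝ) • (hA.eigenvectorBasis i : n → ℝ) +
      (0 : ℝ) • (hA.eigenvectorBasis j : n → ℝ)) k = 0) by simp [hik])
    rw [quadratic_form] at this
    linarith
  · have := hk _ (show ((hA.eigenvectorBasis j k • (hA.eigenvectorBasis i : n → ℝ) +
      (-hA.eigenvectorBasis i k) • (hA.eigenvectorBasis j : n → ℝ)) k = 0) by simp; ring)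
    rw [quadratic_form] at this
    linarith [mul_neg_of_pos_of_neg (sq_pos_of_ne_zero hik) hj,
      mul_nonpos_of_nonneg_of_nonpos (sq_nonneg (hA.eigenvectorBasis j k)) hi.le]

/-- A real symmetric matrix with negative determinant whose quadratic form is nonnegative on a
coordinate hyperplane has exactly one negative eigenvalue, and all others are positive. -/
theorem Matrix.IsHermitian.card_eigenvalues_of_det_neg {n : Type*} [Fintype n] [DecidableEq n]
    {A : Matrix n n ℝ} (hA : A.IsHermitian) (hdet : A.det < 0) (k : n)
    (hk : ∀ x : n → ℝ, x k = 0 → 0 ≤ x ⬝ᵥ A *ᵥ x) :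
    (Finset.univ.filter fun i => hA.eigenvalues i < 0).card = 1 ∧
    (Finset.univ.filter fun i => 0 < hA.eigenvalues i).card = Fintype.card n - 1 := by
  have hprod : ∏ i, hA.eigenvalues i < 0 := by simpa [hA.det_eq_prod_eigenvalues] using hdet
  have hneg : (Finset.univ.filter fun i => hA.eigenvalues i < 0).card = 1 := by
    refine le_antisymm (hA.card_eigenvalues_neg_le_one k hk) (Finset.card_pos.2 ?_)
    by_contra hempty
    refine hprod.not_ge (Finset.prod_nonneg fun i _ => ?_)
    by_contra! hi
    exact hempty ⟨i, by simpa using hi⟩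
  refine ⟨hneg, ?_⟩
  rw [← hneg, ← Finset.card_compl]
  congr 1
  ext i
  have hi : hA.eigenvalues i ≠ 0 := fun h => hprod.ne (Finset.prod_eq_zero (Finset.mem_univ i) h)
  simp only [Finset.mem_filter, Finset.mem_univ, true_and, Finset.mem_compl, not_lt]
  exact ⟨le_of_lt, fun h => h.lt_of_ne hi.symm⟩

theorem cos_pi_div_five_sq : Real.cos (π / 5) ^ 2 = (3 + √5) / 8 := by
  rw [Real.cos_pi_div_five]
  nlinarith [Real.sq_sqrt (show (0 : ℝ) ≤ 5 by norm_num)]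

/-- The quadratic form of `C2` is nonnegative on the hyperplane spanned by the basis vectors
of the subdiagram of type `H₄ ⊔ A₁`. -/
theorem C2_quadratic_form_nonneg (x : Fin 6 → ℝ) (hx : x 4 = 0) : 0 ≤ x ⬝ᵥ C2 *ᵥ x := by
  have hc := cos_pi_div_five_sq
  have h5 : √5 < 7 / 3 := by
    rw [Real.sqrt_lt' (by norm_num)]
    norm_num
  have hsum : x ⬝ᵥ C2 *ᵥ x = (x 0 - Real.cos (π / 5) * x 1) ^ 2 + (x 3 - x 2 / 2) ^ 2 +
      3 / 4 * (x 2 - 2 / 3 * x 1) ^ 2 + (2 / 3 - Real.cos (π / 5) ^ 2) * x 1 ^ 2 + x 5 ^ 2 := by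
    simp [C2, dotProduct, mulVec, Fin.sum_univ_succ, hx, -Real.cos_pi_div_five]
    ring
  have : 0 ≤ 2 / 3 - Real.cos (π / 5) ^ 2 := by linarith
  rw [hsum]
  positivity

theorem stmt1 :
    0 < leadingMinor C2 1 (by norm_num) ∧
    0 < leadingMinor C2 2 (by norm_num) ∧
    0 < leadingMinor C2 3 (by norm_num) ∧
    0 < leadingMinor C2 4 (by norm_num) ∧
    leadingMinor C2 5 (by norm_num) < 0 ∧
    leadingMinor C2 6 (by norm_num) < 0 ∧
    ∀ hC : C2.IsHermitian,
      (Finset.univ.filter fun i => hC.eigenvalues i < 0).card = 1 ∧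
      (Finset.univ.filter fun i => 0 < hC.eigenvalues i).card = 5 := by
  have hc := cos_pi_div_five_sq
  have h2 : √2 ^ 2 = 2 := Real.sq_sqrt (by norm_num)
  have h5_lt : √5 < 7 / 3 := by
    rw [Real.sqrt_lt' (by norm_num)]
    norm_num
  have h5_gt : 11 / 5 < √5 := by
    rw [Real.lt_sqrt (by norm_num)]
    norm_num
  have minor_one : leadingMinor C2 1 (by norm_num) = 1 := by
    simp [leadingMinor, C2]
  have minor_two : leadingMinor C2 2 (by norm_num) = (5 - √5) / 8 := by
    simp [leadingMinor, C2, det_succ_row_zero, Fin.sum_univ_succ, Fin.succAbove,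
      -Real.cos_pi_div_five]
    linarith
  have minor_three : leadingMinor C2 3 (by norm_num) = (3 - √5) / 8 := by
    simp [leadingMinor, C2, det_succ_row_zero, Fin.sum_univ_succ, Fin.succAbove,
      -Real.cos_pi_div_five]
    linarith
  have minor_four : leadingMinor C2 4 (by norm_num) = (7 - 3 * √5) / 32 := by
    simp [leadingMinor, C2, det_succ_row_zero, Fin.sum_univ_succ, Fin.succAbove,
      -Real.cos_pi_div_five]
    linarith
  have minor_five : leadingMinor C2 5 (by norm_num) = (4 - 2 * √5) / 32 := by
    simp [leadingMinor, C2, det_succ_row_zero, Fin.sum_univ_succ, Fin.succAbove,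
      -Real.cos_pi_div_five]
    linarith
  have minor_six : leadingMinor C2 6 (by norm_num) = (1 - √5) / 64 := by
    simp [leadingMinor, C2, det_succ_row_zero, Fin.sum_univ_succ, Fin.succAbove,
      -Real.cos_pi_div_five]
    linear_combination (-1 / 8) * hc - (1 / 8 - 3 / 16 * Real.cos (π / 5) ^ 2) * h2
  have hdet : C2.det < 0 := by
    change leadingMinor C2 6 (by norm_num) < 0
    rw [minor_six]
    linarith
  rw [minor_one, minor_two, minor_three, minor_four, minor_five, minor_six]
  refine ⟨one_pos, by linarith, by linarith, by linarith, by linarith, by linarith, fun hC => ?_⟩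
  exact hC.card_eigenvalues_of_det_neg hdet 4 C2_quadratic_form_nonneg
end

section
/- Let H = C₀⁻¹ be the inverse of the Coxeter–Schläfli matrix of [5,3,3,3,3]. Then H[4][4] < 0, H[5][5] > 0 and H[4][5] ≠ 0 (geometrically: the vertex A₄ of the orthoscheme is a proper point of H⁵ while A₅ is an outer point). Consequently the quotient (H[4][4]·H[5][5] − H[4][5]²)/(H[4][4]·H[5][5]) is strictly greater than 1. -/
open Real Matrix

/-- The Coxeter–Schläfli matrix of the compact Coxeter orthoscheme `[5,3,3,3,3]`. -/
noncomputable def C0 : Matrix (Fin 6) (Fin 6) ℝ :=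
  !![1, -Real.cos (π/5), 0, 0, 0, 0;
     -Real.cos (π/5), 1, -(1/2), 0, 0, 0;
     0, -(1/2), 1, -(1/2), 0, 0;
     0, 0, -(1/2), 1, -(1/2), 0;
     0, 0, 0, -(1/2), 1, -(1/2);
     0, 0, 0, 0, -(1/2), 1]

/-- The adjugate of `C0`, rescaled by `32` and written in terms of `c = cos (π / 5)`. -/
def scaledAdjugate (c : ℝ) : Matrix (Fin 6) (Fin 6) ℝ :=
  !![6, 10*c, 8*c, 6*c, 4*c, 2*c;
     10*c, 10, 8, 6, 4, 2;
     8*c, 8, 16*(1-c^2), 12*(1-c^2), 8*(1-c^2), 4*(1-c^2);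
     6*c, 6, 12*(1-c^2), 18-24*c^2, 12-16*c^2, 6-8*c^2;
     4*c, 4, 8*(1-c^2), 12-16*c^2, 16-24*c^2, 8-12*c^2;
     2*c, 2, 4*(1-c^2), 6-8*c^2, 8-12*c^2, 10-16*c^2]

lemma C0_mul_scaledAdjugate :
    C0 * scaledAdjugate (cos (π/5)) = (6 - 10 * cos (π/5)^2) • 1 := by
  ext i j
  fin_cases i <;> fin_cases j <;>
    simp [C0, scaledAdjugate, Matrix.mul_apply, Fin.sum_univ_succ] <;> ring

lemma cos_pi_div_five_sq_bounds : 5/8 < cos (π/5)^2 ∧ cos (π/5)^2 < 2/3 := by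
  have h5 : √5 ^ 2 = 5 := Real.sq_sqrt (by norm_num)
  have hpos : 0 ≤ √5 := Real.sqrt_nonneg 5
  rw [cos_pi_div_five]
  constructor <;> nlinarith

lemma C0_inv_eq :
    C0⁻¹ = (6 - 10 * cos (π/5)^2)⁻¹ • scaledAdjugate (cos (π/5)) := by
  have hD : 6 - 10 * cos (π/5)^2 ≠ 0 := by linarith [cos_pi_div_five_sq_bounds.1]
  apply Matrix.inv_eq_right_inv
  rw [Matrix.mul_smul, C0_mul_scaledAdjugate, inv_smul_smul₀ hD]

theorem stmt2 :
    C0⁻¹ 4 4 < 0 ∧ 0 < C0⁻¹ 5 5 ∧ C0⁻¹ 4 5 ≠ 0 ∧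
    1 < (C0⁻¹ 4 4 * C0⁻¹ 5 5 - (C0⁻¹ 4 5)^2) / (C0⁻¹ 4 4 * C0⁻¹ 5 5) := by
  obtain ⟨hl, hu⟩ := cos_pi_div_five_sq_bounds
  have hD : (6 - 10 * cos (π/5)^2)⁻¹ < 0 := inv_lt_zero.mpr (by linarith)
  have h44 : C0⁻¹ 4 4 < 0 := by
    rw [C0_inv_eq]
    exact mul_neg_of_neg_of_pos hD (show 0 < 16 - 24 * cos (π/5)^2 by linarith)
  have h55 : 0 < C0⁻¹ 5 5 := by
    rw [C0_inv_eq]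
    exact mul_pos_of_neg_of_neg hD (show 10 - 16 * cos (π/5)^2 < 0 by linarith)
  have h45 : C0⁻¹ 4 5 ≠ 0 := by
    rw [C0_inv_eq]
    exact (mul_neg_of_neg_of_pos hD (show 0 < 8 - 12 * cos (π/5)^2 by linarith)).ne
  refine ⟨h44, h55, h45, ?_⟩
  rw [one_lt_div_of_neg (mul_neg_of_neg_of_pos h44 h55)]
  linarith [pow_pos (abs_pos.mpr h45) 2, sq_abs (C0⁻¹ 4 5)]
end

section
/- Let H = C₂⁻¹ be the inverse of the Coxeter–Schläfli matrix of [5,3,3,3,4]. Then H[4][4] < 0, H[5][5] > 0 and H[4][5] ≠ 0 (geometrically: the vertex A₄ of the orthoscheme is a proper point of H⁵ while A₅ is an outer point). Consequently the quotient (H[4][4]·H[5][5] − H[4][5]²)/(H[4][4]·H[5][5]) is strictly greater than 1. -/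
open Real Matrix

theorem det_C2 : C2.det = 1 / 16 - cos (π / 5) ^ 2 / 8 := by
  have h2 : √2 ^ 2 = 2 := Real.sq_sqrt (by norm_num)
  simp [C2, det_succ_row_zero, Fin.sum_univ_succ, Fin.succAbove]
  ring_nf
  simp only [h2]
  ring

/-- Solving `A *ᵥ v = A.det • eⱼ` computes the `j`-th column of `A⁻¹`. -/
theorem inv_apply_eq_div_det {n : Type*} [Fintype n] [DecidableEq n] {A : Matrix n n ℝ}
    (hA : A.det ≠ 0) {v : n → ℝ} {j : n} (h : A *ᵥ v = A.det • Pi.single j 1) (i : n) :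
    A⁻¹ i j = v i / A.det := by
  have key := congrArg (A⁻¹ *ᵥ ·) h
  simp only [mulVec_mulVec, nonsing_inv_mul A (isUnit_iff_ne_zero.mpr hA), one_mulVec,
    mulVec_smul, mulVec_single_one] at key
  rw [key, eq_div_iff hA]
  simp [mul_comm]

theorem C2_mulVec_column_four :
    C2 *ᵥ ![cos (π / 5) / 8, 1 / 8, (1 - cos (π / 5) ^ 2) / 4, (3 / 4 - cos (π / 5) ^ 2) / 2,
      1 / 2 - 3 / 4 * cos (π / 5) ^ 2, √2 / 2 * (1 / 2 - 3 / 4 * cos (π / 5) ^ 2)] =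
      C2.det • Pi.single 4 1 := by
  have h2 : √2 ^ 2 = 2 := Real.sq_sqrt (by norm_num)
  rw [det_C2]
  ext i
  fin_cases i <;> simp [C2, mulVec, dotProduct, Fin.sum_univ_succ] <;> grind

theorem C2_mulVec_column_five :
    C2 *ᵥ ![√2 / 2 * (cos (π / 5) / 8), √2 / 2 * (1 / 8), √2 / 2 * ((1 - cos (π / 5) ^ 2) / 4),
      √2 / 2 * ((3 / 4 - cos (π / 5) ^ 2) / 2), √2 / 2 * (1 / 2 - 3 / 4 * cos (π / 5) ^ 2),
      5 / 16 - cos (π / 5) ^ 2 / 2] =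
      C2.det • Pi.single 5 1 := by
  have h2 : √2 ^ 2 = 2 := Real.sq_sqrt (by norm_num)
  rw [det_C2]
  ext i
  fin_cases i <;> simp [C2, mulVec, dotProduct, Fin.sum_univ_succ] <;> grind

theorem cos_pi_div_five_sq_mem_Ioo : cos (π / 5) ^ 2 ∈ Set.Ioo (5 / 8 : ℝ) (2 / 3) := by
  have h5 : √5 ^ 2 = 5 := Real.sq_sqrt (by norm_num)
  have hpos : 0 ≤ √5 := Real.sqrt_nonneg 5
  rw [cos_pi_div_five]
  constructor <;> nlinarith

theorem one_lt_sub_sq_div {a b c : ℝ} (ha : a < 0) (hb : 0 < b) (hc : c ≠ 0) :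
    1 < (a * b - c ^ 2) / (a * b) := by
  have hab : a * b < 0 := mul_neg_of_neg_of_pos ha hb
  rw [lt_div_iff_of_neg hab]
  linarith [pow_pos (abs_pos.mpr hc) 2, sq_abs c]

theorem stmt3 :
    C2⁻¹ 4 4 < 0 ∧ 0 < C2⁻¹ 5 5 ∧ C2⁻¹ 4 5 ≠ 0 ∧
    1 < (C2⁻¹ 4 4 * C2⁻¹ 5 5 - (C2⁻¹ 4 5)^2) / (C2⁻¹ 4 4 * C2⁻¹ 5 5) := by
  obtain ⟨hlo, hhi⟩ := cos_pi_div_five_sq_mem_Ioo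
  have hdet : C2.det < 0 := by rw [det_C2]; linarith
  have h44 : C2⁻¹ 4 4 < 0 := by
    rw [inv_apply_eq_div_det hdet.ne C2_mulVec_column_four]
    refine div_neg_of_pos_of_neg ?_ hdet
    change 0 < 1 / 2 - 3 / 4 * cos (π / 5) ^ 2
    linarith
  have h55 : 0 < C2⁻¹ 5 5 := by
    rw [inv_apply_eq_div_det hdet.ne C2_mulVec_column_five]
    refine div_pos_of_neg_of_neg ?_ hdet
    change 5 / 16 - cos (π / 5) ^ 2 / 2 < 0
    linarith
  have h45 : C2⁻¹ 4 5 ≠ 0 := by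
    rw [inv_apply_eq_div_det hdet.ne C2_mulVec_column_five]
    refine div_ne_zero ?_ hdet.ne
    change √2 / 2 * (1 / 2 - 3 / 4 * cos (π / 5) ^ 2) ≠ 0
    exact mul_ne_zero (by positivity) (by linarith : (0 : ℝ) < _).ne'
  exact ⟨h44, h55, h45, one_lt_sub_sq_div h44 h55 h45⟩
end
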